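/- arXiv:2602.12214 — 6 statements merged into one kernel-verified Lean document; each statement's English description precedes it below -/
import Mathlib

section
/- There exists an optimal solution x* of the CKP-LP — i.e. x* ∈ P_CKP and ∑_i p_i x*_i ≥ ∑_i p_i x_i for all x ∈ P_CKP — such that at most two coordinates of x* are fractional, i.e. |{i : 0 < x*_i < 1}| ≤ 2. -/
/-!
The optimal solutions form a nonempty compact set, so this set has an extreme point `x`, which has
at most two fractional coordinates. Indeed, for two distinct colors the color gaps at a nonnegative
point add up to at most `0` (`colorGap_add_nonpos`), so at most one color constraint is tight at
`x`. If three coordinates were fractional, a dimension count would give a nonzero direction `d`,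
supported on the fractional coordinates, that changes neither the total weight nor the gap of the
tight color (`exists_direction`). Then `x + t • d` is feasible for all small `t` of either sign
(`eventually_feasible`), and by optimality `d` is orthogonal to the profits, so both `x + t • d`
and `x - t • d` are optimal, contradicting extremality.
-/

/-- The "color gap" of color `c` at `x`: `∑_{i : κ i = c} x i − ∑_{i : κ i ≠ c} x i`.
The color constraint of `c` is `colorGap n m κ x c ≤ 1`. -/
noncomputable def colorGap (n m : ℕ) (κ : Fin n → Fin m) (x : Fin n → ℝ) (c : Fin m) : ℝ :=
  (∑ i ∈ Finset.univ.filter (fun i => κ i = c), x i)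
    - ∑ i ∈ Finset.univ.filter (fun i => κ i ≠ c), x i

/-- Membership in the CKP-LP region `P_CKP`:
`x ∈ [0,1]^n`, `∑ i, w i * x i ≤ b`, and every color constraint holds. -/
def ckpFeas (n m : ℕ) (κ : Fin n → Fin m) (w : Fin n → ℝ) (b : ℝ) (x : Fin n → ℝ) : Prop :=
  (∀ i, 0 ≤ x i ∧ x i ≤ 1) ∧ (∑ i, w i * x i) ≤ b ∧ ∀ c : Fin m, colorGap n m κ x c ≤ 1

theorem colorGap_eq_sum (n m : ℕ) (κ : Fin n → Fin m) (x : Fin n → ℝ) (c : Fin m) :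
    colorGap n m κ x c = ∑ i, (if κ i = c then (1 : ℝ) else -1) * x i := by
  unfold colorGap
  rw [Finset.sum_filter, Finset.sum_filter, ← Finset.sum_sub_distrib]
  refine Finset.sum_congr rfl fun i _ => ?_
  by_cases h : κ i = c <;> simp [h]

theorem colorGap_add_smul (n m : ℕ) (κ : Fin n → Fin m) (x d : Fin n → ℝ) (t : ℝ) (c : Fin m) :
    colorGap n m κ (x + t • d) c = colorGap n m κ x c + t * colorGap n m κ d c := by
  simp only [colorGap_eq_sum, Finset.mul_sum, ← Finset.sum_add_distrib, Pi.add_apply,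
    Pi.smul_apply, smul_eq_mul]
  exact Finset.sum_congr rfl fun i _ => by ring

theorem sum_mul_add_smul {n : ℕ} (a x d : Fin n → ℝ) (t : ℝ) :
    ∑ i, a i * (x + t • d) i = ∑ i, a i * x i + t * ∑ i, a i * d i := by
  simp only [Finset.mul_sum, ← Finset.sum_add_distrib, Pi.add_apply, Pi.smul_apply, smul_eq_mul]
  exact Finset.sum_congr rfl fun i _ => by ring

/-- It follows that two distinct color constraints cannot both be tight at a nonnegative point. -/
theorem colorGap_add_nonpos (n m : ℕ) (κ : Fin n → Fin m) (x : Fin n → ℝ) (hx : ∀ i, 0 ≤ x i)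
    {c e : Fin m} (hce : c ≠ e) : colorGap n m κ x c + colorGap n m κ x e ≤ 0 := by
  rw [colorGap_eq_sum, colorGap_eq_sum, ← Finset.sum_add_distrib]
  refine Finset.sum_nonpos fun i _ => ?_
  have := hx i
  by_cases h : κ i = c
  · simp [h, hce]
  · by_cases h' : κ i = e
    · simp [h', hce.symm]
    · simp only [h, h', if_false]
      linarith

/-- The vectors supported on `F` form a space of dimension at least three, so two linear
functionals have a common nonzero zero in it. -/
theorem exists_direction {n : ℕ} (F : Finset (Fin n)) (hF : 2 < F.card) (a g : Fin n → ℝ) :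
    ∃ d : Fin n → ℝ, d ≠ 0 ∧ (∀ i, i ∉ F → d i = 0) ∧ ∑ i, a i * d i = 0 ∧
      ∑ i, g i * d i = 0 := by
  let L : (Fin n → ℝ) →ₗ[ℝ] ({i // i ∉ F} → ℝ) × ℝ × ℝ :=
    (LinearMap.funLeft ℝ ℝ (Subtype.val : {i // i ∉ F} → Fin n)).prod
      ((∑ i, a i • LinearMap.proj i).prod (∑ i, g i • LinearMap.proj i))
  have hlt : Module.finrank ℝ (({i // i ∉ F} → ℝ) × ℝ × ℝ) < Module.finrank ℝ (Fin n → ℝ) := by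
    have h1 : Fintype.card {i // i ∉ F} = n - F.card := by
      rw [Fintype.card_subtype_compl]; simp
    have h2 : F.card ≤ n := by simpa using F.card_le_univ
    simp only [Module.finrank_prod, Module.finrank_fintype_fun_eq_card, Module.finrank_self, h1,
      Fintype.card_fin]
    omega
  obtain ⟨d, hd, hd0⟩ := (Submodule.ne_bot_iff _).1 (LinearMap.ker_ne_bot_of_finrank_lt (f := L) hlt)
  have hL : L d = 0 := hd
  refine ⟨d, hd0, fun i hi => ?_, ?_, ?_⟩
  · simpa [L, LinearMap.funLeft_apply] using congrFun (congrArg Prod.fst hL) ⟨i, hi⟩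
  · simpa [L] using congrArg (fun q => q.2.1) hL
  · simpa [L] using congrArg (fun q => q.2.2) hL

/-- A feasible point may be moved slightly, in both senses, along a direction that is supported on
fractional coordinates and along which the weight and every tight color gap are constant. -/
theorem eventually_feasible (n m : ℕ) (κ : Fin n → Fin m) (w : Fin n → ℝ) (b : ℝ)
    (x d : Fin n → ℝ) (hx : ckpFeas n m κ w b x)
    (hd : ∀ i, ¬ (0 < x i ∧ x i < 1) → d i = 0) (hwd : ∑ i, w i * d i = 0)
    (hg : ∀ c, colorGap n m κ x c = 1 → colorGap n m κ d c = 0) :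
    ∀ᶠ t : ℝ in nhds 0, ckpFeas n m κ w b (x + t • d) := by
  have hlim : ∀ u v : ℝ, Filter.Tendsto (fun t : ℝ => u + t * v) (nhds 0) (nhds u) := by
    intro u v
    have : Continuous fun t : ℝ => u + t * v := by fun_prop
    simpa using this.tendsto 0
  have h1 : ∀ᶠ t : ℝ in nhds 0, ∀ i, 0 ≤ (x + t • d) i ∧ (x + t • d) i ≤ 1 := by
    refine Filter.eventually_all.2 fun i => ?_
    by_cases hi : 0 < x i ∧ x i < 1
    · filter_upwards [(hlim (x i) (d i)).eventually_const_lt hi.1,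
        (hlim (x i) (d i)).eventually_lt_const hi.2] with t ht ht'
      exact ⟨ht.le, ht'.le⟩
    · refine Filter.Eventually.of_forall fun t => ?_
      simpa [hd i hi] using hx.1 i
  have h2 : ∀ᶠ t : ℝ in nhds 0, ∀ c, colorGap n m κ (x + t • d) c ≤ 1 := by
    refine Filter.eventually_all.2 fun c => ?_
    simp only [colorGap_add_smul]
    rcases (hx.2.2 c).lt_or_eq with h | h
    · filter_upwards [(hlim _ (colorGap n m κ d c)).eventually_lt_const h] with t ht
      exact ht.le
    · exact Filter.Eventually.of_forall fun t => by simp [h, hg c h]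
  filter_upwards [h1, h2] with t ht ht'
  refine ⟨ht, ?_, ht'⟩
  rw [sum_mul_add_smul, hwd, mul_zero, add_zero]
  exact hx.2.1

theorem isCompact_ckpFeas (n m : ℕ) (κ : Fin n → Fin m) (w : Fin n → ℝ) (b : ℝ) :
    IsCompact {x | ckpFeas n m κ w b x} := by
  refine (isCompact_Icc (a := (0 : Fin n → ℝ)) (b := 1)).of_isClosed_subset ?_
    fun x hx => ⟨fun i => (hx.1 i).1, fun i => (hx.1 i).2⟩
  simp only [ckpFeas, colorGap_eq_sum, Set.ofPred_and, Set.ofPred_forall]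
  refine IsClosed.inter (isClosed_iInter fun i => ?_)
    (IsClosed.inter ?_ (isClosed_iInter fun c => ?_))
  · exact (isClosed_le (by fun_prop) (by fun_prop)).inter (isClosed_le (by fun_prop) (by fun_prop))
  · exact isClosed_le (by fun_prop) (by fun_prop)
  · exact isClosed_le (by fun_prop) (by fun_prop)

/-- There exists an optimal solution `x*` of the CKP-LP with at most two
fractional coordinates, i.e. `|{i : 0 < x*_i < 1}| ≤ 2`. -/
theorem ckp_lp_optimum_with_at_most_two_fractional (n m : ℕ) (κ : Fin n → Fin m)
    (w p : Fin n → ℝ) (b : ℝ) (hw : ∀ i, 0 < w i) (hb : 0 < b) :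
    ∃ xstar : Fin n → ℝ, ckpFeas n m κ w b xstar ∧
      (∀ x : Fin n → ℝ, ckpFeas n m κ w b x → (∑ i, p i * x i) ≤ ∑ i, p i * xstar i) ∧
      Set.ncard {i : Fin n | 0 < xstar i ∧ xstar i < 1} ≤ 2 := by
  have hK := isCompact_ckpFeas n m κ w b
  have hcont : Continuous fun x : Fin n → ℝ => ∑ i, p i * x i := by fun_prop
  have h0 : ckpFeas n m κ w b 0 := by
    refine ⟨fun i => by simp, by simpa using hb.le, fun c => by simp [colorGap]⟩
  obtain ⟨y, hy, hymax⟩ := hK.exists_isMaxOn ⟨0, h0⟩ hcont.continuousOn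
  let S : Set (Fin n → ℝ) := {x | ckpFeas n m κ w b x} ∩ {x | ∑ i, p i * y i ≤ ∑ i, p i * x i}
  have hS : IsCompact S := hK.inter_right (isClosed_le continuous_const hcont)
  obtain ⟨x, hxS, hext⟩ := hS.extremePoints_nonempty ⟨y, hy, le_refl (∑ i, p i * y i)⟩
  have hxf : ckpFeas n m κ w b x := hxS.1
  have hxopt : ∀ z, ckpFeas n m κ w b z → ∑ i, p i * z i ≤ ∑ i, p i * x i :=
    fun z hz => le_trans (hymax hz) hxS.2
  refine ⟨x, hxf, hxopt, ?_⟩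
  by_contra! hcard
  let F : Finset (Fin n) := Finset.univ.filter fun i => 0 < x i ∧ x i < 1
  have hF : 2 < F.card := by
    rw [← Set.ncard_coe_finset]
    simpa [F] using hcard
  -- The functional `g` is the gap of the tight color; it is arbitrary if no color is tight.
  obtain ⟨g, hg⟩ : ∃ g : Fin n → ℝ, ∀ c, colorGap n m κ x c = 1 →
      ∀ d : Fin n → ℝ, ∑ i, g i * d i = 0 → colorGap n m κ d c = 0 := by
    by_cases h : ∃ c, colorGap n m κ x c = 1
    · obtain ⟨c, hc⟩ := h
      refine ⟨fun i => if κ i = c then 1 else -1, fun e he d hd => ?_⟩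
      have hce : c = e := by
        by_contra hne
        have := colorGap_add_nonpos n m κ x (fun i => (hxf.1 i).1) hne
        linarith
      rw [← hce, colorGap_eq_sum]
      exact hd
    · exact ⟨0, fun c hc => (h ⟨c, hc⟩).elim⟩
  obtain ⟨d, hd0, hdF, hwd, hgd⟩ := exists_direction F hF w g
  have hev := eventually_feasible n m κ w b x d hxf
    (fun i hi => hdF i (by simpa [F] using hi)) hwd (fun c hc => hg c hc d hgd)
  obtain ⟨r, hr, hball⟩ := Metric.eventually_nhds_iff.1 hev
  have hfeas : ckpFeas n m κ w b (x + (r / 2) • d) :=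
    hball (by rw [Real.dist_eq, sub_zero, abs_of_pos (by linarith)]; linarith)
  have hfeas' : ckpFeas n m κ w b (x + (-(r / 2)) • d) :=
    hball (by rw [Real.dist_eq, sub_zero, abs_neg, abs_of_pos (by linarith)]; linarith)
  have ho := hxopt _ hfeas
  have ho' := hxopt _ hfeas'
  rw [sum_mul_add_smul] at ho ho'
  have hxy : ∑ i, p i * y i ≤ ∑ i, p i * x i := hxS.2
  have hm : x + (r / 2) • d ∈ S := by
    refine ⟨hfeas, ?_⟩
    rw [Set.mem_ofPred_eq, sum_mul_add_smul]
    linarith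
  have hm' : x + (-(r / 2)) • d ∈ S := by
    refine ⟨hfeas', ?_⟩
    rw [Set.mem_ofPred_eq, sum_mul_add_smul]
    linarith
  have hseg : x ∈ openSegment ℝ (x + (r / 2) • d) (x + (-(r / 2)) • d) := by
    refine ⟨1 / 2, 1 / 2, by norm_num, by norm_num, by norm_num, ?_⟩
    module
  have heq := hext hm hm' hseg
  have hrd : (r / 2) • d = 0 := by simpa using heq
  rcases smul_eq_zero.1 hrd with h | h
  · linarith
  · exact hd0 h
end

section
/- Define, for i, t, d, a ∈ {0,…,n} and q ∈ {0,…,b}, the value f(i,t,d,a,q) = max{ p(S) : S ⊆ {1,…,i}, |S| = t, k̄(S) = d, k_{κ_i}(S) = a, w(S) = q } (taken over a possibly empty collection of sets). Then the optimal value of the Colored Knapsack Problem, max{ p(S) : S ⊆ {1,…,n}, w(S) ≤ b, and k_c(S) ≤ (|S| − k_c(S)) + 1 for every color c }, equals the maximum of f(n,t,d,a,q) over all t, d, a ∈ {0,…,n} and q ∈ {0,…,b} with 2d ≤ t + 1 for which the defining collection of sets is nonempty. -/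
/-!
For a fixed set `S`, the color constraints for all colors together say exactly that
`2 k̄(S) ≤ |S| + 1` (`two_mul_domCount_le_iff`). So every CKP-feasible `S` lies in the
collection defining `f(n, |S|, k̄(S), k_{κ n}(S), w(S))`, whose indices are in range because
counts are at most `|S| ≤ n` and weights are positive; conversely every set in a collection with
`2d ≤ t + 1` and `q ≤ b` is feasible. Both maxima therefore range over the same sets.
-/

/-- `k_c(S)`: the number of items of color `c` in `S`. -/
def colCount (m : ℕ) (κ : ℕ → Fin m) (c : Fin m) (S : Finset ℕ) : ℕ :=
  (S.filter fun i => κ i = c).card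

/-- `k̄(S) = max_{c ∈ {1,…,m}} k_c(S)`: the cardinality of a dominant color in `S`. -/
def domCount (m : ℕ) (κ : ℕ → Fin m) (S : Finset ℕ) : ℕ :=
  Finset.univ.sup fun c : Fin m => colCount m κ c S

/-- The dynamic programming value
`f(i,t,d,a,q) = max{ p(S) : S ⊆ {1,…,i}, |S| = t, k̄(S) = d, k_{κ i}(S) = a, w(S) = q }`,
taken in `WithBot ℤ` so that an empty collection of sets has value `⊥`. -/
def fDP (m : ℕ) (κ : ℕ → Fin m) (w p : ℕ → ℤ) (i t d a : ℕ) (q : ℤ) : WithBot ℤ :=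
  ((Finset.Icc 1 i).powerset.filter fun S =>
      S.card = t ∧ domCount m κ S = d ∧ colCount m κ (κ i) S = a ∧ (∑ j ∈ S, w j) = q).sup
    fun S => ((∑ j ∈ S, p j : ℤ) : WithBot ℤ)

theorem colCount_le_card (m : ℕ) (κ : ℕ → Fin m) (c : Fin m) (S : Finset ℕ) :
    colCount m κ c S ≤ S.card :=
  Finset.card_filter_le _ _

/-- The color constraints hold for all colors iff they hold for a dominant one. The truncated
subtraction is exact since `k_c(S) ≤ |S|`. -/
theorem two_mul_domCount_le_iff (m : ℕ) (κ : ℕ → Fin m) (S : Finset ℕ) :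
    2 * domCount m κ S ≤ S.card + 1 ↔
      ∀ c : Fin m, colCount m κ c S ≤ (S.card - colCount m κ c S) + 1 := by
  constructor
  · intro h c
    have h1 : colCount m κ c S ≤ domCount m κ S :=
      Finset.le_sup (f := fun c : Fin m => colCount m κ c S) (Finset.mem_univ c)
    have h2 := colCount_le_card m κ c S
    omega
  · intro h
    have h1 : domCount m κ S ≤ (S.card + 1) / 2 := Finset.sup_le fun c _ => by
      have h2 := h c
      have h3 := colCount_le_card m κ c S
      omega
    omega

/-- The optimal value of the CKP,
`max{ p(S) : S ⊆ {1,…,n}, w(S) ≤ b, k_c(S) ≤ (|S| − k_c(S)) + 1 for every color c }`,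
equals the maximum of `f(n,t,d,a,q)` over all `t, d, a ∈ {0,…,n}` and `q ∈ {0,…,b}` with
`2d ≤ t + 1` for which the defining collection of sets is nonempty (maxima taken in
`WithBot ℤ`, where the empty collection contributes `⊥`). -/
theorem ckp_value_eq_dp1_value (n m : ℕ) (hn : 1 ≤ n) (w p : ℕ → ℤ) (b : ℤ)
    (κ : ℕ → Fin m) (hw : ∀ i ∈ Finset.Icc 1 n, 0 < w i) (hb : 0 < b) :
    ((Finset.Icc 1 n).powerset.filter fun S =>
        (∑ i ∈ S, w i) ≤ b ∧
        ∀ c : Fin m, colCount m κ c S ≤ (S.card - colCount m κ c S) + 1).sup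
      (fun S => ((∑ i ∈ S, p i : ℤ) : WithBot ℤ))
    =
    ((Finset.Icc 0 n ×ˢ Finset.Icc 0 n).filter fun td => 2 * td.2 ≤ td.1 + 1).sup
      (fun td => (Finset.Icc 0 n).sup fun a => (Finset.Icc (0 : ℤ) b).sup fun q =>
        fDP m κ w p n td.1 td.2 a q) := by
  apply le_antisymm
  · refine Finset.sup_le fun S hS => ?_
    obtain ⟨hSn, hSb, hSc⟩ := by simpa only [Finset.mem_filter, Finset.mem_powerset] using hS
    have hcard : S.card ≤ n := by simpa using Finset.card_le_card hSn
    have hdom : 2 * domCount m κ S ≤ S.card + 1 :=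
      (two_mul_domCount_le_iff m κ S).2 hSc
    have hdn : domCount m κ S ≤ n :=
      (Finset.sup_le fun c _ => colCount_le_card m κ c S).trans hcard
    have han : colCount m κ (κ n) S ≤ n := (colCount_le_card m κ _ S).trans hcard
    have hq : 0 ≤ ∑ i ∈ S, w i := Finset.sum_nonneg fun i hi => (hw i (hSn hi)).le
    have h1 : ((∑ i ∈ S, p i : ℤ) : WithBot ℤ) ≤ fDP m κ w p n S.card (domCount m κ S)
        (colCount m κ (κ n) S) (∑ i ∈ S, w i) :=
      Finset.le_sup (f := fun S : Finset ℕ => ((∑ j ∈ S, p j : ℤ) : WithBot ℤ)) (by simpa using hSn)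
    refine h1.trans (Finset.le_sup_of_le (b := (S.card, domCount m κ S)) ?_
      (Finset.le_sup_of_le (b := colCount m κ (κ n) S) ?_
        (Finset.le_sup_of_le (b := ∑ i ∈ S, w i) ?_ le_rfl)))
    · simp [hcard, hdn, hdom]
    · simp [han]
    · simp [hq, hSb]
  · refine Finset.sup_le fun td htd => Finset.sup_le fun a _ => Finset.sup_le fun q hq =>
      Finset.sup_le fun S hS => ?_
    obtain ⟨hSn, ht, hd, -, hSq⟩ := by
      simpa only [Finset.mem_filter, Finset.mem_powerset] using hS
    have htd2 : 2 * td.2 ≤ td.1 + 1 := (Finset.mem_filter.1 htd).2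
    refine Finset.le_sup (f := fun S : Finset ℕ => ((∑ i ∈ S, p i : ℤ) : WithBot ℤ))
      (Finset.mem_filter.2 ⟨Finset.mem_powerset.2 hSn, hSq.trans_le (Finset.mem_Icc.1 hq).2, ?_⟩)
    rw [← ht, ← hd] at htd2
    exact (two_mul_domCount_le_iff m κ S).1 htd2
end

section
/- (Correctness of fathoming rule 2.) Let S ⊆ {1,…,i} with w(S) ≤ b, and let N ∈ ℕ be such that every T ⊆ {i+1,…,n} with w(T) ≤ b − w(S) satisfies |T| ≤ N. If 2·k̄(S) > |S| + 1 + N, then there is no T ⊆ {i+1,…,n} such that w(S ∪ T) ≤ b and S ∪ T satisfies the color constraint k_c(S ∪ T) ≤ (|S ∪ T| − k_c(S ∪ T)) + 1 for every color c. -/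
/-!
The color constraint for `c` says `2 · k_c(S ∪ T) ≤ |S ∪ T| + 1`. Take `c` attaining `k̄(S)`.
Since `S` and `T` are disjoint, `T` fits in the residual capacity `b − w(S)`, so `|T| ≤ N`, and
`2 · k̄(S) ≤ 2 · k_c(S ∪ T) ≤ |S| + |T| + 1 ≤ |S| + 1 + N`, contradicting the hypothesis.
-/

/-- correctness of fathoming rule 2: Let `S ⊆ {1,…,i}` with `w(S) ≤ b`, and
let `N` bound the cardinality of every `T ⊆ {i+1,…,n}` with `w(T) ≤ b − w(S)`. If
`2·k̄(S) > |S| + 1 + N`, then no `T ⊆ {i+1,…,n}` makes `S ∪ T` capacity-feasible and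
satisfy the color constraint `k_c(S ∪ T) ≤ (|S ∪ T| − k_c(S ∪ T)) + 1` for every color. -/
theorem fathoming_rule_two_correct (n m : ℕ) (w p : ℕ → ℤ) (b : ℤ) (κ : ℕ → Fin m)
    (hw : ∀ j ∈ Finset.Icc 1 n, 0 < w j) (hb : 0 < b)
    (i : ℕ) (hi : i ≤ n) (S : Finset ℕ) (hS : S ⊆ Finset.Icc 1 i)
    (hSw : (∑ j ∈ S, w j) ≤ b) (N : ℕ)
    (hN : ∀ T ⊆ Finset.Icc (i + 1) n,
      (∑ j ∈ T, w j) ≤ b - (∑ j ∈ S, w j) → T.card ≤ N)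
    (hdom : 2 * (Finset.univ.sup fun c : Fin m => (S.filter fun j => κ j = c).card)
      > S.card + 1 + N) :
    ¬ ∃ T ⊆ Finset.Icc (i + 1) n,
        (∑ j ∈ S ∪ T, w j) ≤ b ∧
        ∀ c : Fin m, ((S ∪ T).filter fun j => κ j = c).card
          ≤ ((S ∪ T).card - ((S ∪ T).filter fun j => κ j = c).card) + 1 := by
  rintro ⟨T, hT, hTw, hcol⟩
  have hdisj : Disjoint S T := by
    rw [Finset.disjoint_left]
    intro j hjS hjT
    have h1 := Finset.mem_Icc.mp (hS hjS)
    have h2 := Finset.mem_Icc.mp (hT hjT)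
    omega
  rw [Finset.sum_union hdisj] at hTw
  have hTN : T.card ≤ N := hN T hT (by linarith)
  have hcard : (S ∪ T).card = S.card + T.card := Finset.card_union_of_disjoint hdisj
  -- `Fin m` is nonempty because `κ` takes values in it, so the maximum `k̄(S)` is attained.
  have : Nonempty (Fin m) := ⟨κ 0⟩
  obtain ⟨c, -, hc⟩ := Finset.exists_mem_eq_sup (Finset.univ : Finset (Fin m))
    Finset.univ_nonempty (fun c : Fin m => (S.filter fun j => κ j = c).card)
  rw [hc] at hdom
  have hmono : (S.filter fun j => κ j = c).card ≤ ((S ∪ T).filter fun j => κ j = c).card :=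
    Finset.card_le_card (Finset.filter_subset_filter _ Finset.subset_union_left)
  -- Needed so that the natural-number subtraction in the color constraint does not truncate.
  have hle : ((S ∪ T).filter fun j => κ j = c).card ≤ (S ∪ T).card :=
    Finset.card_filter_le _ _
  have hcc := hcol c
  omega
end

section
/- (Correctness of fathoming rule 3.) Let S ⊆ {1,…,i} with w(S) ≤ b, and let T* ⊆ {i+1,…,n} satisfy w(T*) ≤ b − w(S) and p(T*) ≥ p(T) for every T ⊆ {i+1,…,n} with w(T) ≤ b − w(S). If S ∪ T* satisfies the color constraint k_c(S ∪ T*) ≤ (|S ∪ T*| − k_c(S ∪ T*)) + 1 for every color c, then S ∪ T* is CKP-feasible and p(S ∪ T) ≤ p(S ∪ T*) for every T ⊆ {i+1,…,n} such that S ∪ T is CKP-feasible; that is, S ∪ T* is an optimal CKP-feasible extension of S. -/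
/-!
Dropping the color constraints turns the problem of extending `S` into a knapsack problem on
`{i+1,…,n}` with capacity `b - w(S)`, a relaxation. Weights and profits of `S ∪ T` split because
`S` and `T` are disjoint, so an optimal solution of the relaxation that happens to satisfy the
color constraints is an optimal CKP-feasible extension.
-/

/-- A set `S` is CKP-feasible if `w(S) ≤ b` and the color constraint
`k_c(S) ≤ (|S| − k_c(S)) + 1` holds for every color `c`. -/
def ckpFeasible (m : ℕ) (κ : ℕ → Fin m) (w : ℕ → ℤ) (b : ℤ) (S : Finset ℕ) : Prop :=
  (∑ j ∈ S, w j) ≤ b ∧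
  ∀ c : Fin m, (S.filter fun j => κ j = c).card
    ≤ (S.card - (S.filter fun j => κ j = c).card) + 1

/-- correctness of fathoming rule 3: Let `S ⊆ {1,…,i}` with `w(S) ≤ b`, and
let `T* ⊆ {i+1,…,n}` be a maximum-profit set among those with `w(T) ≤ b − w(S)`. If
`S ∪ T*` satisfies every color constraint, then `S ∪ T*` is CKP-feasible and is an optimal
CKP-feasible extension of `S`: `p(S ∪ T) ≤ p(S ∪ T*)` for every `T ⊆ {i+1,…,n}` with
`S ∪ T` CKP-feasible. -/
theorem fathoming_rule_three_correct (n m : ℕ) (w p : ℕ → ℤ) (b : ℤ) (κ : ℕ → Fin m)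
    (hw : ∀ j ∈ Finset.Icc 1 n, 0 < w j) (hb : 0 < b)
    (i : ℕ) (hi : i ≤ n) (S : Finset ℕ) (hS : S ⊆ Finset.Icc 1 i)
    (hSw : (∑ j ∈ S, w j) ≤ b)
    (Tstar : Finset ℕ) (hTstar : Tstar ⊆ Finset.Icc (i + 1) n)
    (hTstarw : (∑ j ∈ Tstar, w j) ≤ b - (∑ j ∈ S, w j))
    (hTstaropt : ∀ T ⊆ Finset.Icc (i + 1) n,
      (∑ j ∈ T, w j) ≤ b - (∑ j ∈ S, w j) → (∑ j ∈ T, p j) ≤ ∑ j ∈ Tstar, p j)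
    (hcolor : ∀ c : Fin m, ((S ∪ Tstar).filter fun j => κ j = c).card
      ≤ ((S ∪ Tstar).card - ((S ∪ Tstar).filter fun j => κ j = c).card) + 1) :
    ckpFeasible m κ w b (S ∪ Tstar) ∧
    ∀ T ⊆ Finset.Icc (i + 1) n,
      ckpFeasible m κ w b (S ∪ T) → (∑ j ∈ S ∪ T, p j) ≤ ∑ j ∈ S ∪ Tstar, p j := by
  -- `S` lies in `{1,…,i}` and any extension lies in `{i+1,…,n}`, so sums over `S ∪ T` split.
  have hdisj : ∀ T ⊆ Finset.Icc (i + 1) n, Disjoint S T := by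
    intro T hT
    rw [Finset.disjoint_left]
    intro j hjS hjT
    have h1 := Finset.mem_Icc.mp (hS hjS)
    have h2 := Finset.mem_Icc.mp (hT hjT)
    omega
  refine ⟨⟨?_, hcolor⟩, ?_⟩
  · rw [Finset.sum_union (hdisj Tstar hTstar)]
    linarith
  · intro T hT hfeas
    -- The color constraints on `S ∪ T` are discarded: `Tstar` is optimal for the relaxation.
    have hweight := hfeas.1
    rw [Finset.sum_union (hdisj T hT)] at hweight
    rw [Finset.sum_union (hdisj T hT), Finset.sum_union (hdisj Tstar hTstar)]
    have hprofit := hTstaropt T hT (by linarith)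
    linarith
end

section
/- (Correctness of dominance rule 1.) Assume the items are sorted by color, i.e. κ : {1,…,n} → {1,…,m} is monotone nondecreasing. Let i ∈ {1,…,n} and let S₁, S₂ ⊆ {1,…,i} satisfy |S₁| ≥ |S₂|, k̄(S₁) ≤ k̄(S₂), k_{κ_i}(S₁) ≤ k_{κ_i}(S₂), w(S₁) ≤ w(S₂), and p(S₁) ≥ p(S₂). Then for every T ⊆ {i+1,…,n} such that S₂ ∪ T is CKP-feasible, the set S₁ ∪ T is also CKP-feasible and p(S₁ ∪ T) ≥ p(S₂ ∪ T). -/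
/-- The color constraint says `2 k_c(S) ≤ |S| + 1`; the truncated subtraction is harmless because
`k_c(S) ≤ |S|`. -/
lemma color_constraint_iff {m : ℕ} (κ : ℕ → Fin m) (S : Finset ℕ) (c : Fin m) :
    (S.filter fun j => κ j = c).card ≤ (S.card - (S.filter fun j => κ j = c).card) + 1 ↔
      2 * (S.filter fun j => κ j = c).card ≤ S.card + 1 := by
  have := Finset.card_filter_le S (fun j => κ j = c)
  omega

lemma card_filter_union_of_disjoint {m : ℕ} (κ : ℕ → Fin m) {S T : Finset ℕ} (h : Disjoint S T)
    (c : Fin m) :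
    ((S ∪ T).filter fun j => κ j = c).card =
      (S.filter fun j => κ j = c).card + (T.filter fun j => κ j = c).card := by
  rw [Finset.filter_union, Finset.card_union_of_disjoint (Finset.disjoint_filter_filter h)]

/-- correctness of dominance rule 1: Assume the items `{1,…,n}` are sorted
by color (`κ` is monotone nondecreasing on `{1,…,n}`). Let `S₁, S₂ ⊆ {1,…,i}` with
`|S₁| ≥ |S₂|`, `k̄(S₁) ≤ k̄(S₂)`, `k_{κ i}(S₁) ≤ k_{κ i}(S₂)`, `w(S₁) ≤ w(S₂)`, and
`p(S₁) ≥ p(S₂)`. Then for every `T ⊆ {i+1,…,n}` such that `S₂ ∪ T` is CKP-feasible, the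
set `S₁ ∪ T` is also CKP-feasible and `p(S₁ ∪ T) ≥ p(S₂ ∪ T)`. -/
theorem dominance_rule_one_correct (n m : ℕ) (w p : ℕ → ℤ) (b : ℤ) (κ : ℕ → Fin m)
    (hw : ∀ j ∈ Finset.Icc 1 n, 0 < w j) (hb : 0 < b)
    (hmono : MonotoneOn κ (Set.Icc 1 n))
    (i : ℕ) (hi1 : 1 ≤ i) (hin : i ≤ n)
    (S₁ S₂ : Finset ℕ) (hS₁ : S₁ ⊆ Finset.Icc 1 i) (hS₂ : S₂ ⊆ Finset.Icc 1 i)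
    (hcard : S₂.card ≤ S₁.card)
    (hdom : (Finset.univ.sup fun c : Fin m => (S₁.filter fun j => κ j = c).card)
      ≤ Finset.univ.sup fun c : Fin m => (S₂.filter fun j => κ j = c).card)
    (hcur : (S₁.filter fun j => κ j = κ i).card ≤ (S₂.filter fun j => κ j = κ i).card)
    (hweight : (∑ j ∈ S₁, w j) ≤ ∑ j ∈ S₂, w j)
    (hprofit : (∑ j ∈ S₂, p j) ≤ ∑ j ∈ S₁, p j) :
    ∀ T ⊆ Finset.Icc (i + 1) n,
      ckpFeasible m κ w b (S₂ ∪ T) →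
      ckpFeasible m κ w b (S₁ ∪ T) ∧ (∑ j ∈ S₂ ∪ T, p j) ≤ ∑ j ∈ S₁ ∪ T, p j := by
  intro T hT hfeas
  have hdisj : ∀ S ⊆ Finset.Icc 1 i, Disjoint S T := by
    intro S hS
    rw [Finset.disjoint_left]
    intro j hjS hjT
    have h1 := Finset.mem_Icc.mp (hS hjS)
    have h2 := Finset.mem_Icc.mp (hT hjT)
    omega
  have hd₁ := hdisj S₁ hS₁
  have hd₂ := hdisj S₂ hS₂
  obtain ⟨hfw, hfc⟩ := hfeas
  rw [Finset.sum_union hd₂] at hfw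
  refine ⟨⟨?_, fun c => ?_⟩, ?_⟩
  · rw [Finset.sum_union hd₁]
    linarith
  · rw [color_constraint_iff, card_filter_union_of_disjoint κ hd₁, Finset.card_union_of_disjoint hd₁]
    obtain ⟨c', hc'⟩ : ∃ c' : Fin m,
        (S₁.filter fun j => κ j = c).card + (T.filter fun j => κ j = c).card ≤
          (S₂.filter fun j => κ j = c').card + (T.filter fun j => κ j = c').card := by
      rcases lt_trichotomy c (κ i) with hlt | heq | hgt
      · have hTc : T.filter (fun j => κ j = c) = ∅ := by
          refine Finset.filter_eq_empty_iff.mpr fun j hj hjc => ?_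
          have h := Finset.mem_Icc.mp (hT hj)
          have hle : κ i ≤ κ j :=
            hmono ⟨hi1, hin⟩ ⟨by omega, h.2⟩ (by omega)
          exact absurd hlt (not_lt.mpr (hjc ▸ hle))
        obtain ⟨c', -, hc'⟩ := Finset.exists_mem_eq_sup Finset.univ ⟨c, Finset.mem_univ c⟩
          (fun c : Fin m => (S₂.filter fun j => κ j = c).card)
        have hle : (S₁.filter fun j => κ j = c).card ≤
            Finset.univ.sup fun c : Fin m => (S₁.filter fun j => κ j = c).card :=
          Finset.le_sup (f := fun c : Fin m => (S₁.filter fun j => κ j = c).card)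
            (Finset.mem_univ c)
        refine ⟨c', ?_⟩
        rw [hTc, Finset.card_empty]
        omega
      · subst heq
        exact ⟨κ i, by omega⟩
      · have hSc : S₁.filter (fun j => κ j = c) = ∅ := by
          refine Finset.filter_eq_empty_iff.mpr fun j hj hjc => ?_
          have h := Finset.mem_Icc.mp (hS₁ hj)
          have hle : κ j ≤ κ i :=
            hmono ⟨h.1, by omega⟩ ⟨hi1, hin⟩ h.2
          exact absurd hgt (not_lt.mpr (hjc ▸ hle))
        refine ⟨c, ?_⟩
        rw [hSc, Finset.card_empty]
        omega
    have h := hfc c'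
    rw [color_constraint_iff, card_filter_union_of_disjoint κ hd₂,
      Finset.card_union_of_disjoint hd₂] at h
    omega
  · rw [Finset.sum_union hd₁, Finset.sum_union hd₂]
    linarith
end

section
/- (Correctness of dominance rule 2, state merging at a color boundary.) Let i ∈ {1,…,n} and suppose every item j ∈ {i+1,…,n} has a color different from the color of every item in {1,…,i}. Let S, S' ⊆ {1,…,i} satisfy |S| = |S'|, 2·k̄(S) ≤ |S| + 1, and 2·k̄(S') ≤ |S'| + 1. Then for every T ⊆ {i+1,…,n}, the set S ∪ T satisfies 2·k̄(S ∪ T) ≤ |S ∪ T| + 1 if and only if S' ∪ T satisfies 2·k̄(S' ∪ T) ≤ |S' ∪ T| + 1. -/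
/-!
No color occurs on both sides of the boundary, so each color class of `S ∪ T` lies entirely in `S`
or entirely in `T`. The classes lying in `S` satisfy the required bound because `S` itself is
feasible, and adding `T` only increases the total. Hence `S ∪ T` is feasible iff
`2 * k_c(T) ≤ |S| + |T| + 1` for every color `c` (`color_condition_union_iff`), a condition that
depends on `S` only through `|S|`.
-/

theorem two_mul_sup_le_iff {m : ℕ} (f : Fin m → ℕ) (N : ℕ) :
    2 * Finset.univ.sup f ≤ N ↔ ∀ c, 2 * f c ≤ N := by
  have h : ∀ a : ℕ, 2 * a ≤ N ↔ a ≤ N / 2 := fun a => by omega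
  simp only [h, Finset.sup_le_iff, Finset.mem_univ, true_imp_iff]

/-- If `S` is feasible and shares no color with `T`, feasibility of `S ∪ T` depends on `S` only
through its cardinality. -/
theorem color_condition_union_iff {m : ℕ} (κ : ℕ → Fin m) (S T : Finset ℕ)
    (hsep : ∀ j ∈ T, ∀ j' ∈ S, κ j ≠ κ j')
    (hSok : 2 * (Finset.univ.sup fun c : Fin m => (S.filter fun j => κ j = c).card)
      ≤ S.card + 1) :
    2 * (Finset.univ.sup fun c : Fin m => ((S ∪ T).filter fun j => κ j = c).card)
        ≤ (S ∪ T).card + 1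
      ↔ ∀ c, 2 * (T.filter fun j => κ j = c).card ≤ S.card + T.card + 1 := by
  have hdisj : Disjoint S T :=
    Finset.disjoint_left.mpr fun j hjS hjT => hsep j hjT j hjS rfl
  rw [two_mul_sup_le_iff] at hSok ⊢
  rw [Finset.card_union_of_disjoint hdisj]
  refine forall_congr' fun c => ?_
  have hc := hSok c
  rw [Finset.filter_union,
    Finset.card_union_of_disjoint (Finset.disjoint_filter_filter hdisj)]
  rcases (T.filter fun j => κ j = c).eq_empty_or_nonempty with hT | ⟨j, hj⟩
  · -- Color `c` is absent from `T`: both bounds hold, the left one by feasibility of `S`.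
    rw [hT, Finset.card_empty]
    omega
  · -- Color `c` occurs in `T`, hence not in `S`, and the two bounds coincide.
    obtain ⟨hjT, hjc⟩ := Finset.mem_filter.mp hj
    have hS : (S.filter fun j => κ j = c) = ∅ :=
      Finset.filter_eq_empty_iff.mpr fun j' hj' h => hsep j hjT j' hj' (hjc.trans h.symm)
    rw [hS, Finset.card_empty, zero_add]

/-- correctness of dominance rule 2, state merging at a color boundary:
Suppose every item in `{i+1,…,n}` has a color different from that of every item in
`{1,…,i}`. Let `S, S' ⊆ {1,…,i}` with `|S| = |S'|`, `2·k̄(S) ≤ |S| + 1`, and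
`2·k̄(S') ≤ |S'| + 1`. Then for every `T ⊆ {i+1,…,n}`, `S ∪ T` satisfies the color
condition `2·k̄(S ∪ T) ≤ |S ∪ T| + 1` iff `S' ∪ T` satisfies it. -/
theorem dominance_rule_two_correct (n m : ℕ) (κ : ℕ → Fin m)
    (i : ℕ) (hi1 : 1 ≤ i) (hin : i ≤ n)
    (hsplit : ∀ j ∈ Finset.Icc (i + 1) n, ∀ j' ∈ Finset.Icc 1 i, κ j ≠ κ j')
    (S S' : Finset ℕ) (hS : S ⊆ Finset.Icc 1 i) (hS' : S' ⊆ Finset.Icc 1 i)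
    (hcard : S.card = S'.card)
    (hSok : 2 * (Finset.univ.sup fun c : Fin m => (S.filter fun j => κ j = c).card)
      ≤ S.card + 1)
    (hS'ok : 2 * (Finset.univ.sup fun c : Fin m => (S'.filter fun j => κ j = c).card)
      ≤ S'.card + 1) :
    ∀ T ⊆ Finset.Icc (i + 1) n,
      (2 * (Finset.univ.sup fun c : Fin m => ((S ∪ T).filter fun j => κ j = c).card)
          ≤ (S ∪ T).card + 1
        ↔ 2 * (Finset.univ.sup fun c : Fin m => ((S' ∪ T).filter fun j => κ j = c).card)
          ≤ (S' ∪ T).card + 1) := by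
  intro T hT
  rw [color_condition_union_iff κ S T (fun j hj j' hj' => hsplit j (hT hj) j' (hS hj')) hSok,
    color_condition_union_iff κ S' T (fun j hj j' hj' => hsplit j (hT hj) j' (hS' hj')) hS'ok,
    hcard]
end
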